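/- arXiv:2311.02547 — 2 statements merged into one kernel-verified Lean document; each statement's English description precedes it below -/
import Mathlib

section
/- Let w ≥ 4 be an even integer. Then Σ_{a+c=w−1, a≥2, c≥1} (−1)^a·ζ(a,1,c) = ζ(w−2,2) − ζ(w−1,1) + (1/2)·ζ(w). -/
/-- The multiple zeta value `ζ(s₁,…,s_d) = Σ_{k₁>⋯>k_d≥1} 1/(k₁^{s₁}⋯k_d^{s_d})`. -/
noncomputable def mzv {d : ℕ} (s : Fin d → ℕ) : ℝ :=
  ∑' k : {k : Fin d → ℕ // StrictAnti k ∧ ∀ i, 0 < k i},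
    ∏ i, (1 : ℝ) / (k.1 i : ℝ) ^ s i

namespace A1C

open Finset

abbrev E (d : ℕ) := {k : Fin d → ℕ // StrictAnti k ∧ ∀ i, 0 < k i}

/-! ### The finite identity -/

noncomputable def D (n j : ℕ) : ℝ := ∑ i ∈ range j, 1 / ((n : ℝ) + 2 + i)

noncomputable def P (n : ℕ) : ℝ := ∑ j ∈ range (n + 1), 1 / ((j : ℝ) + 1) * D n (j + 1)

noncomputable def Q (n : ℕ) : ℝ := ∑ j ∈ range n, 1 / ((j : ℝ) + 1) * D n j

noncomputable def H (n : ℕ) : ℝ := ∑ j ∈ range n, 1 / ((j : ℝ) + 1)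

noncomputable def H2 (n : ℕ) : ℝ := ∑ j ∈ range n, 1 / ((j : ℝ) + 1) ^ 2

lemma D_succ_right (n j : ℕ) : D n (j + 1) = D n j + 1 / ((n : ℝ) + 2 + j) := by
  simp [D, sum_range_succ]

lemma D_succ_left (n j : ℕ) :
    D (n + 1) j = D n j + 1 / ((n : ℝ) + 2 + j) - 1 / ((n : ℝ) + 2) := by
  induction j with
  | zero => simp [D]
  | succ j ih =>
    rw [D_succ_right, ih, D_succ_right]
    push_cast
    have : (n : ℝ) + 1 + 2 + j = n + 2 + (j + 1) := by ring
    rw [this]; ring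

lemma P_succ (n : ℕ) : P (n + 1) = P n + 1 / (2 * ((n : ℝ) + 2) ^ 2) := by
  have h : ∀ j : ℕ, 1 / ((j : ℝ) + 1) * D (n + 1) (j + 1)
      = 1 / ((j : ℝ) + 1) * D n (j + 1)
        - 1 / ((n : ℝ) + 2) * (1 / (((n + 1 : ℕ) : ℝ) + 2 + j)) := by
    intro j
    rw [D_succ_left]
    have h1 : (j : ℝ) + 1 ≠ 0 := by positivity
    have h2 : (n : ℝ) + 2 ≠ 0 := by positivity
    have h3 : (n : ℝ) + 1 + 2 + j ≠ 0 := by positivity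
    have h4 : (n : ℝ) + 2 + (j + 1) ≠ 0 := by positivity
    push_cast
    field_simp
    ring
  rw [P, sum_range_succ, sum_congr rfl (fun j _ => h j), sum_sub_distrib, ← mul_sum]
  change P n - _ * D (n + 1) (n + 1) + _ = _
  rw [D_succ_right (n + 1) (n + 1)]
  have h2 : (n : ℝ) + 2 ≠ 0 := by positivity
  have e : ((n + 1 : ℕ) : ℝ) + 2 + ((n + 1 : ℕ) : ℝ) = 2 * (n + 2) := by push_cast; ring
  rw [e]
  have e : ((n + 1 : ℕ) : ℝ) + 1 = n + 2 := by push_cast; ring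
  rw [e]
  field_simp
  ring

lemma Q_succ (n : ℕ) : Q (n + 1) = Q n + H n / (((n : ℝ) + 1) * (n + 2))
    + 1 / (2 * ((n : ℝ) + 1) ^ 2) - 1 / (((n : ℝ) + 1) * (n + 2)) := by
  have h : ∀ j : ℕ, 1 / ((j : ℝ) + 1) * D (n + 1) j
      = 1 / ((j : ℝ) + 1) * D n j
        - 1 / ((n : ℝ) + 1) * (1 / ((n : ℝ) + 2 + j))
        + 1 / (((n : ℝ) + 1) * (n + 2)) * (1 / ((j : ℝ) + 1)) := by
    intro j
    rw [D_succ_left]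
    have h1 : (j : ℝ) + 1 ≠ 0 := by positivity
    have h2 : (n : ℝ) + 2 ≠ 0 := by positivity
    have h3 : (n : ℝ) + 2 + j ≠ 0 := by positivity
    have h4 : (n : ℝ) + 1 ≠ 0 := by positivity
    field_simp
    ring
  rw [Q, sum_range_succ, sum_congr rfl (fun j _ => h j), sum_add_distrib, sum_sub_distrib,
    ← mul_sum, ← mul_sum]
  change Q n - _ * D n n + _ * H n + _ = _
  rw [D_succ_left]
  have h2 : (n : ℝ) + 2 ≠ 0 := by positivity
  have h4 : (n : ℝ) + 1 ≠ 0 := by positivity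
  have e : (n : ℝ) + 2 + n = 2 * (n + 1) := by ring
  rw [e]
  field_simp
  ring

lemma finite_identity (n : ℕ) :
    P n + Q n = H2 n - 1 / ((n : ℝ) + 1) * H n + 1 / (2 * ((n : ℝ) + 1) ^ 2) := by
  induction n with
  | zero => norm_num [P, Q, H, H2, D]
  | succ n ih =>
    have e1 : H2 (n + 1) = H2 n + 1 / ((n : ℝ) + 1) ^ 2 := by simp [H2, sum_range_succ]
    have e2 : H (n + 1) = H n + 1 / ((n : ℝ) + 1) := by simp [H, sum_range_succ]
    have e3 : P n = H2 n - 1 / ((n : ℝ) + 1) * H n + 1 / (2 * ((n : ℝ) + 1) ^ 2) - Q n := by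
      linarith
    rw [P_succ, Q_succ, e1, e2, e3]
    push_cast
    have e : (n : ℝ) + 1 + 1 = n + 2 := by ring
    rw [e]
    have h2 : (n : ℝ) + 2 ≠ 0 := by positivity
    have h4 : (n : ℝ) + 1 ≠ 0 := by positivity
    field_simp
    ring

lemma hasSum_of_eq {ι : Type*} {f g : ι → ℝ} {a b : ℝ} (h : HasSum f a)
    (hf : ∀ x, g x = f x) (hb : b = a) : HasSum g b := by
  rw [hb, show g = f from funext hf]; exact h

/-! ### Telescoping -/

lemma telescope (x : ℝ) (hx : 0 < x) (n : ℕ) :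
    HasSum (fun q : ℕ => 1 / (x + q) - 1 / (x + q + n)) (∑ j ∈ range n, 1 / (x + j)) := by
  induction n with
  | zero => simpa using (hasSum_zero : HasSum (fun _ : ℕ => (0 : ℝ)) 0)
  | succ n ih =>
    rw [sum_range_succ]
    have key : HasSum (fun q : ℕ => 1 / (x + q + n) - 1 / (x + q + (n + 1 : ℕ)))
        (1 / (x + n)) := by
      rw [hasSum_iff_tendsto_nat_of_nonneg]
      · have hs : ∀ N : ℕ, ∑ q ∈ range N, (1 / (x + q + n) - 1 / (x + q + (n + 1 : ℕ)))
            = 1 / (x + n) - 1 / (x + n + N) := by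
          intro N
          induction N with
          | zero => simp
          | succ N ih =>
            rw [sum_range_succ, ih]
            push_cast
            rw [show x + n + (N : ℝ) = x + N + n by ring,
              show x + n + ((N : ℝ) + 1) = x + N + (n + 1) by ring]
            ring
        simp_rw [hs]
        have : Filter.Tendsto (fun N : ℕ => 1 / (x + n + (N : ℝ))) Filter.atTop (nhds 0) := by
          simp_rw [one_div]
          exact (Filter.tendsto_atTop_add_const_left _ _
            tendsto_natCast_atTop_atTop).inv_tendsto_atTop
        simpa using this.const_sub (1 / (x + n))
      · intro q
        rw [sub_nonneg]
        apply one_div_le_one_div_of_le (by positivity)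
        push_cast; linarith
    refine hasSum_of_eq (ih.add key) (fun q => ?_) rfl
    ring

/-- Inner sum over `k`. -/
lemma inner_k (n p : ℕ) :
    HasSum (fun q : ℕ => 1 / (((n + p + q + 3 : ℕ) : ℝ) * ((n + p + q + 3 : ℕ) + (n + 1 : ℕ))))
      (1 / ((n : ℝ) + 1) * ∑ j ∈ range (n + 1), 1 / ((n : ℝ) + p + 3 + j)) := by
  have := (telescope ((n : ℝ) + p + 3) (by positivity) (n + 1)).mul_left (1 / ((n : ℝ) + 1))
  refine hasSum_of_eq this (fun q => ?_) rfl
  push_cast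
  have h1 : (n : ℝ) + p + q + 3 ≠ 0 := by positivity
  have h2 : (n : ℝ) + p + q + 3 + (n + 1) ≠ 0 := by positivity
  have h3 : (n : ℝ) + 1 ≠ 0 := by positivity
  rw [show (n : ℝ) + p + 3 + q = n + p + q + 3 by ring]
  field_simp
  ring

/-- Inner sum over `m`. -/
lemma inner_m (n : ℕ) :
    HasSum (fun p : ℕ => 1 / ((n + p + 2 : ℕ) : ℝ) *
      ∑ j ∈ range (n + 1), 1 / ((n : ℝ) + p + 3 + j)) (P n) := by
  have := hasSum_sum (s := range (n + 1)) (fun j _ =>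
    (telescope ((n : ℝ) + 2) (by positivity) (j + 1)).mul_left (1 / ((j : ℝ) + 1)))
  refine hasSum_of_eq this (fun p => ?_) rfl
  rw [mul_sum]
  refine sum_congr rfl fun j _ => ?_
  push_cast
  rw [show (n : ℝ) + p + 3 + j = n + p + 2 + (j + 1) by ring,
    show (n : ℝ) + 2 + p = n + p + 2 by ring]
  have h1 : (n : ℝ) + p + 2 ≠ 0 := by positivity
  have h2 : (n : ℝ) + p + 2 + (j + 1) ≠ 0 := by positivity
  have h3 : (j : ℝ) + 1 ≠ 0 := by positivity
  field_simp
  ring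

/-! ### Index equivalences -/

noncomputable def eA : ℕ × ℕ × ℕ ≃ E 3 := Equiv.ofBijective
  (fun x => ⟨![x.1 + x.2.1 + x.2.2 + 3, x.1 + x.2.1 + 2, x.1 + 1], by
    constructor
    · rw [Fin.strictAnti_iff_succ_lt]
      intro i; fin_cases i <;> simp <;> omega
    · intro i; fin_cases i <;> simp⟩) (by
    constructor
    · rintro ⟨a, b, c⟩ ⟨az, bz, cz⟩ h
      have h0 := congrFun (congrArg Subtype.val h) 0
      have h1 := congrFun (congrArg Subtype.val h) 1
      have h2 := congrFun (congrArg Subtype.val h) 2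
      simp at h0 h1 h2
      simp only [Prod.mk.injEq]
      omega
    · rintro ⟨k, hk, hp⟩
      have h01 := hk (show (0 : Fin 3) < 1 by decide)
      have h12 := hk (show (1 : Fin 3) < 2 by decide)
      have h2 := hp 2
      refine ⟨(k 2 - 1, k 1 - k 2 - 1, k 0 - k 1 - 1), ?_⟩
      apply Subtype.ext
      funext i
      fin_cases i <;> simp <;> omega)

noncomputable def eB : (Σ k : ℕ, Σ m : Fin k, Fin m) ≃ E 3 := Equiv.ofBijective
  (fun x => ⟨![x.1 + 1, x.2.1 + 1, x.2.2 + 1], by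
    have h1 := x.2.1.2
    have h2 := x.2.2.2
    constructor
    · rw [Fin.strictAnti_iff_succ_lt]
      intro i; fin_cases i <;> simp
    · intro i; fin_cases i <;> simp⟩) (by
    constructor
    · rintro ⟨a, ⟨b, hb⟩, ⟨c, hc⟩⟩ ⟨az, ⟨bz, hbz⟩, ⟨cz, hcz⟩⟩ h
      have h0 := congrFun (congrArg Subtype.val h) 0
      have h1 := congrFun (congrArg Subtype.val h) 1
      have h2 := congrFun (congrArg Subtype.val h) 2
      simp at h0 h1 h2
      subst h0 h1 h2
      rfl
    · rintro ⟨k, hk, hp⟩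
      have h01 := hk (show (0 : Fin 3) < 1 by decide)
      have h12 := hk (show (1 : Fin 3) < 2 by decide)
      have h2 := hp 2
      refine ⟨⟨k 0 - 1, ⟨k 1 - 1, by omega⟩, ⟨k 2 - 1, by simp only; omega⟩⟩, ?_⟩
      apply Subtype.ext
      funext i
      fin_cases i <;> simp <;> omega)

noncomputable def eC : (Σ k : ℕ, Fin k) ≃ E 2 := Equiv.ofBijective
  (fun x => ⟨![x.1 + 1, x.2 + 1], by
    have h1 := x.2.2
    constructor
    · rw [Fin.strictAnti_iff_succ_lt]
      intro i; fin_cases i; simp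
    · intro i; fin_cases i <;> simp⟩) (by
    constructor
    · rintro ⟨a, ⟨b, hb⟩⟩ ⟨az, ⟨bz, hbz⟩⟩ h
      have h0 := congrFun (congrArg Subtype.val h) 0
      have h1 := congrFun (congrArg Subtype.val h) 1
      simp at h0 h1
      subst h0 h1
      rfl
    · rintro ⟨k, hk, hp⟩
      have h01 := hk (show (0 : Fin 2) < 1 by decide)
      have h2 := hp 1
      refine ⟨⟨k 0 - 1, ⟨k 1 - 1, by omega⟩⟩, ?_⟩
      apply Subtype.ext
      funext i
      fin_cases i <;> simp <;> omega)

noncomputable def eD : ℕ ≃ E 1 := Equiv.ofBijective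
  (fun x => ⟨![x + 1], by
    constructor
    · intro i j h; omega
    · intro i; fin_cases i; simp⟩) (by
    constructor
    · intro a b h
      have h0 := congrFun (congrArg Subtype.val h) 0
      simpa using h0
    · rintro ⟨k, hk, hp⟩
      have h2 := hp 0
      refine ⟨k 0 - 1, ?_⟩
      apply Subtype.ext
      funext i
      fin_cases i; simp; omega)

lemma eA0 (n p q : ℕ) : (eA (n, p, q)).1 0 = n + p + q + 3 := rfl
lemma eA1 (n p q : ℕ) : (eA (n, p, q)).1 1 = n + p + 2 := rfl
lemma eA2 (n p q : ℕ) : (eA (n, p, q)).1 2 = n + 1 := rfl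
lemma eB0 (k : ℕ) (m : Fin k) (n : Fin m) : (eB ⟨k, ⟨m, n⟩⟩).1 0 = k + 1 := rfl
lemma eB1 (k : ℕ) (m : Fin k) (n : Fin m) : (eB ⟨k, ⟨m, n⟩⟩).1 1 = m + 1 := rfl
lemma eB2 (k : ℕ) (m : Fin k) (n : Fin m) : (eB ⟨k, ⟨m, n⟩⟩).1 2 = n + 1 := rfl

lemma eC0 (x : Σ k : ℕ, Fin k) : (eC x).1 0 = x.1 + 1 := rfl
lemma eC1 (x : Σ k : ℕ, Fin k) : (eC x).1 1 = x.2 + 1 := rfl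
lemma eD0 (n : ℕ) : (eD n).1 0 = n + 1 := rfl

/-! ### Depth one and two -/

lemma summable_sq : Summable (fun n : ℕ => 1 / ((n : ℝ) + 1) ^ 2) := by
  have := (summable_nat_add_iff 1).2 (Real.summable_one_div_nat_pow.2 (by norm_num : 1 < 2))
  simpa using this

lemma mzv1 (a : ℕ) (ha : 2 ≤ a) : HasSum (fun n : ℕ => 1 / ((n : ℝ) + 1) ^ a) (mzv ![a]) := by
  have hs : Summable (fun n : ℕ => 1 / ((n : ℝ) + 1) ^ a) := by
    have := (summable_nat_add_iff 1).2 (Real.summable_one_div_nat_pow.2 (by omega : 1 < a))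
    simpa using this
  refine hasSum_of_eq hs.hasSum (fun _ => rfl) ?_
  rw [mzv, ← eD.tsum_eq]
  simp [eD0]

lemma summable2 (a b : ℕ) (h : (2 ≤ a ∧ 2 ≤ b) ∨ (3 ≤ a ∧ 1 ≤ b)) :
    Summable (fun x : Σ k : ℕ, Fin k =>
      1 / ((x.1 : ℝ) + 1) ^ a * (1 / ((x.2 : ℝ) + 1) ^ b)) := by
  have h0 := Summable.mul_of_nonneg summable_sq summable_sq
    (fun n => by positivity) (fun n => by positivity)
  have hinj : Function.Injective (fun x : Σ k : ℕ, Fin k => (x.1, (x.2 : ℕ))) := by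
    rintro ⟨a, ⟨b, hb⟩⟩ ⟨az, ⟨bz, hbz⟩⟩ h
    simp at h
    obtain ⟨rfl, rfl⟩ := h
    rfl
  refine Summable.of_nonneg_of_le (fun x => by positivity) ?_ (h0.comp_injective hinj)
  rintro ⟨k, ⟨j, hj⟩⟩
  simp only [Function.comp]
  rw [one_div_mul_one_div, one_div_mul_one_div]
  apply one_div_le_one_div_of_le (by positivity)
  have hk1 : (1 : ℝ) ≤ k + 1 := by linarith [(Nat.cast_nonneg k : (0 : ℝ) ≤ k)]
  have hj1 : (1 : ℝ) ≤ j + 1 := by linarith [(Nat.cast_nonneg j : (0 : ℝ) ≤ j)]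
  have hjk : (j : ℝ) + 1 ≤ k + 1 := by
    have : (j : ℝ) ≤ k := by exact_mod_cast hj.le
    linarith
  rcases h with ⟨h1, h2⟩ | ⟨h1, h2⟩
  · gcongr <;> assumption
  · calc ((k : ℝ) + 1) ^ 2 * ((j : ℝ) + 1) ^ 2
        = ((k : ℝ) + 1) ^ 2 * ((j : ℝ) + 1) * (j + 1) := by ring
      _ ≤ ((k : ℝ) + 1) ^ 2 * ((k : ℝ) + 1) * (j + 1) := by gcongr
      _ = ((k : ℝ) + 1) ^ 3 * (j + 1) ^ 1 := by ring
      _ ≤ _ := by gcongr <;> assumption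

lemma mzv2 (a b : ℕ) (h : (2 ≤ a ∧ 2 ≤ b) ∨ (3 ≤ a ∧ 1 ≤ b)) :
    HasSum (fun n : ℕ => 1 / ((n : ℝ) + 1) ^ a * ∑ j ∈ range n, 1 / ((j : ℝ) + 1) ^ b)
      (mzv ![a, b]) := by
  have hs := summable2 a b h
  have e : mzv ![a, b] = ∑' x : Σ k : ℕ, Fin k,
      1 / ((x.1 : ℝ) + 1) ^ a * (1 / ((x.2 : ℝ) + 1) ^ b) := by
    rw [mzv, ← eC.tsum_eq]
    refine tsum_congr fun x => ?_
    simp [eC0, eC1, Fin.prod_univ_two]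
    ring
  rw [e]
  refine hs.hasSum.sigma fun n => ?_
  rw [mul_sum, ← Fin.sum_univ_eq_sum_range
    (fun j : ℕ => 1 / ((n : ℝ) + 1) ^ a * (1 / ((j : ℝ) + 1) ^ b))]
  exact hasSum_fintype _

/-! ### Depth three -/

lemma summable3 (a c : ℕ) (ha : 2 ≤ a) (hc : 1 ≤ c) :
    Summable (fun x : E 3 => 1 / (x.1 0 : ℝ) ^ a * (1 / (x.1 1 : ℝ)) * (1 / (x.1 2 : ℝ) ^ c)) := by
  have hr : Summable (fun n : ℕ => 1 / ((n : ℝ) + 1) ^ (4 / 3 : ℝ)) := by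
    have := (summable_nat_add_iff 1).2
      (Real.summable_one_div_nat_rpow.2 (by norm_num : (1 : ℝ) < 4 / 3))
    simpa using this
  have h0 := Summable.mul_of_nonneg hr
    (Summable.mul_of_nonneg hr hr (fun n => by positivity) (fun n => by positivity))
    (fun n => by positivity) (fun n => by simp only [Pi.zero_apply]; positivity)
  rw [← eA.summable_iff]
  refine Summable.of_nonneg_of_le (fun x => ?_) ?_ h0
  · simp only [Function.comp]; positivity
  rintro ⟨n, p, q⟩
  simp only [Function.comp, eA0, eA1, eA2]
  rw [one_div_mul_one_div, one_div_mul_one_div, one_div_mul_one_div, one_div_mul_one_div]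
  apply one_div_le_one_div_of_le (by positivity)
  push_cast
  have hn : (0 : ℝ) ≤ n := Nat.cast_nonneg n
  have hp : (0 : ℝ) ≤ p := Nat.cast_nonneg p
  have hq : (0 : ℝ) ≤ q := Nat.cast_nonneg q
  set K : ℝ := (n : ℝ) + p + q + 3 with hK
  have s1 : ∀ y : ℝ, 0 ≤ y → (y + 1) ^ (4 / 3 : ℝ) = (y + 1) ^ (1 / 3 : ℝ) * (y + 1) := by
    intro y hy
    rw [show (4 / 3 : ℝ) = 1 / 3 + 1 by norm_num, Real.rpow_add (by positivity), Real.rpow_one]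
  have s2 : K ^ 2 = K ^ (4 / 3 : ℝ) * K ^ (1 / 3 : ℝ) * K ^ (1 / 3 : ℝ) := by
    rw [← Real.rpow_add (by positivity), ← Real.rpow_add (by positivity)]
    norm_num
  rw [s1 n hn, s1 p hp]
  calc _ = ((q : ℝ) + 1) ^ (4 / 3 : ℝ) * ((p : ℝ) + 1) ^ (1 / 3 : ℝ)
          * ((n : ℝ) + 1) ^ (1 / 3 : ℝ) * ((p : ℝ) + 1) * ((n : ℝ) + 1) := by ring
    _ ≤ K ^ (4 / 3 : ℝ) * K ^ (1 / 3 : ℝ) * K ^ (1 / 3 : ℝ) * (n + p + 2) * (n + 1) := by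
        gcongr <;> linarith
    _ = K ^ 2 * (n + p + 2) * (n + 1) ^ 1 := by rw [s2]; ring
    _ ≤ K ^ a * (n + p + 2) * (n + 1) ^ c := by
        gcongr <;> first | assumption | linarith

lemma mzv3 (a c : ℕ) (ha : 2 ≤ a) (hc : 1 ≤ c) :
    HasSum (fun x : E 3 => 1 / (x.1 0 : ℝ) ^ a * (1 / (x.1 1 : ℝ)) * (1 / (x.1 2 : ℝ) ^ c))
      (mzv ![a, 1, c]) := by
  refine hasSum_of_eq (summable3 a c ha hc).hasSum (fun _ => rfl) ?_
  rw [mzv]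
  refine tsum_congr fun x => ?_
  simp [Fin.prod_univ_three]
  ring

noncomputable def F (t : ℕ) (x : E 3) : ℝ :=
  1 / (x.1 2 : ℝ) ^ (2 * t + 1) * (1 / (x.1 1 : ℝ)) *
    (1 / ((x.1 0 : ℝ) * ((x.1 0 : ℝ) + (x.1 2 : ℝ))))

noncomputable def G (t : ℕ) (x : E 3) : ℝ :=
  1 / (x.1 0 : ℝ) ^ (2 * t + 1) * (1 / (x.1 1 : ℝ)) *
    (1 / ((x.1 0 : ℝ) * ((x.1 0 : ℝ) + (x.1 2 : ℝ))))

lemma geom (t : ℕ) (k m n : ℝ) (hk : 0 < k) (hm : 0 < m) (hn : 0 < n) :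
    ∑ a ∈ Icc 2 (2 * t + 2), (-1 : ℝ) ^ a * (1 / k ^ a * (1 / m) * (1 / n ^ (2 * t + 3 - a)))
    = 1 / n ^ (2 * t + 1) * (1 / m) * (1 / (k * (k + n)))
      + 1 / k ^ (2 * t + 1) * (1 / m) * (1 / (k * (k + n))) := by
  have g := geom_sum₂_mul (-(1 / k)) (1 / n) (2 * t + 1)
  have e : ∑ a ∈ Icc 2 (2 * t + 2),
      (-1 : ℝ) ^ a * (1 / k ^ a * (1 / m) * (1 / n ^ (2 * t + 3 - a)))
      = (1 / k ^ 2 * (1 / m) * (1 / n)) *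
        ∑ i ∈ range (2 * t + 1), (-(1 / k)) ^ i * (1 / n) ^ (2 * t + 1 - 1 - i) := by
    rw [← Finset.Ico_add_one_right_eq_Icc, sum_Ico_eq_sum_range, mul_sum,
      show 2 * t + 2 + 1 - 2 = 2 * t + 1 by omega]
    refine sum_congr rfl fun i hi => ?_
    have hi := mem_range.1 hi
    rw [show 2 * t + 3 - (2 + i) = (2 * t + 1 - 1 - i) + 1 by omega, neg_pow (1 / k)]
    simp only [one_div, inv_pow, pow_add, mul_inv]
    ring
  rw [e]
  have hodd : Odd (2 * t + 1) := ⟨t, rfl⟩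
  rw [hodd.neg_pow] at g
  have hne : -(1 / k) - 1 / n ≠ 0 := by
    have : 0 < 1 / k + 1 / n := by positivity
    linarith
  rw [eq_div_of_mul_eq hne g]
  have hd : -(1 / k) - 1 / n = -((k + n) / (k * n)) := by field_simp; ring
  rw [hd, one_div_pow, one_div_pow]
  have : k + n ≠ 0 := by positivity
  field_simp
  ring

lemma FG_hasSum (t : ℕ) : HasSum (fun x => F t x + G t x)
    (∑ a ∈ Icc 2 (2 * t + 2), (-1 : ℝ) ^ a * mzv ![a, 1, 2 * t + 3 - a]) := by
  have := hasSum_sum (s := Icc 2 (2 * t + 2)) (fun a ha =>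
    (mzv3 a (2 * t + 3 - a) (mem_Icc.1 ha).1
      (by have := (mem_Icc.1 ha).2; omega)).mul_left ((-1 : ℝ) ^ a))
  refine hasSum_of_eq this (fun x => ?_) rfl
  have h := x.2.2
  rw [geom t _ _ _ (Nat.cast_pos.2 (h 0)) (Nat.cast_pos.2 (h 1)) (Nat.cast_pos.2 (h 2))]
  rfl

lemma F_nonneg (t x) : 0 ≤ F t x := by unfold F; positivity
lemma G_nonneg (t x) : 0 ≤ G t x := by unfold G; positivity

lemma F_summable (t : ℕ) : Summable (F t) :=
  Summable.of_nonneg_of_le (F_nonneg t) (fun x => le_add_of_nonneg_right (G_nonneg t x))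
    (FG_hasSum t).summable

lemma G_summable (t : ℕ) : Summable (G t) :=
  Summable.of_nonneg_of_le (G_nonneg t) (fun x => le_add_of_nonneg_left (F_nonneg t x))
    (FG_hasSum t).summable

lemma F_hasSum (t : ℕ) :
    HasSum (fun n : ℕ => 1 / ((n : ℝ) + 1) ^ (2 * t + 2) * P n) (∑' x, F t x) := by
  have h := (eA.hasSum_iff).2 (F_summable t).hasSum
  have hs : ∀ n : ℕ, Summable (fun y : ℕ × ℕ => (F t ∘ eA) (n, y)) := fun n => h.summable.prod_factor n
  refine h.prod_fiberwise fun n => ?_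
  have h1 : HasSum (fun p : ℕ => 1 / ((n : ℝ) + 1) ^ (2 * t + 2) * (1 / ((n + p + 2 : ℕ) : ℝ) *
      ∑ j ∈ range (n + 1), 1 / ((n : ℝ) + p + 3 + j))) (∑' y : ℕ × ℕ, (F t ∘ eA) (n, y)) := by
    refine (hs n).hasSum.prod_fiberwise fun p => ?_
    refine hasSum_of_eq ((inner_k n p).mul_left
      (1 / ((n : ℝ) + 1) ^ (2 * t + 1) * (1 / ((n + p + 2 : ℕ) : ℝ)))) (fun q => ?_) ?_
    · simp only [Function.comp, F, eA0, eA1, eA2]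
      push_cast
      rfl
    · rw [pow_succ _ (2 * t + 1), ← one_div_mul_one_div]
      ring
  have h2 := (inner_m n).mul_left (1 / ((n : ℝ) + 1) ^ (2 * t + 2))
  rw [← h1.unique h2]
  exact (hs n).hasSum

lemma G_hasSum (t : ℕ) :
    HasSum (fun n : ℕ => 1 / ((n : ℝ) + 1) ^ (2 * t + 2) * Q n) (∑' x, G t x) := by
  have h := (eB.hasSum_iff).2 (G_summable t).hasSum
  refine h.sigma fun n => ?_
  have : 1 / ((n : ℝ) + 1) ^ (2 * t + 2) * Q n
      = ∑ y : (Σ m : Fin n, Fin m), (G t ∘ eB) ⟨n, y⟩ := by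
    rw [Fintype.sum_sigma, Q, mul_sum, ← Fin.sum_univ_eq_sum_range
      (fun j : ℕ => 1 / ((n : ℝ) + 1) ^ (2 * t + 2) * (1 / ((j : ℝ) + 1) * D n j))]
    refine sum_congr rfl fun m _ => ?_
    rw [D, mul_sum, mul_sum, ← Fin.sum_univ_eq_sum_range
      (fun i : ℕ => 1 / ((n : ℝ) + 1) ^ (2 * t + 2) *
        (1 / (((m : ℕ) : ℝ) + 1) * (1 / ((n : ℝ) + 2 + i))))]
    refine sum_congr rfl fun i _ => ?_
    simp only [Function.comp, G, eB0, eB1, eB2]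
    push_cast
    rw [show (n : ℝ) + 1 + ((i : ℕ) + 1) = n + 2 + (i : ℕ) by ring,
      pow_succ _ (2 * t + 1), ← one_div_mul_one_div, ← one_div_mul_one_div]
    ring
  rw [this]
  exact hasSum_fintype _

lemma main (t : ℕ) :
    ∑ a ∈ Icc 2 (2 * t + 2), (-1 : ℝ) ^ a * mzv ![a, 1, 2 * t + 3 - a]
    = mzv ![2 * t + 2, 2] - mzv ![2 * t + 3, 1] + 1 / 2 * mzv ![2 * t + 4] := by
  rw [(FG_hasSum t).unique ((F_summable t).hasSum.add (G_summable t).hasSum)]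
  refine ((F_hasSum t).add (G_hasSum t)).unique ?_
  refine hasSum_of_eq (((mzv2 (2 * t + 2) 2 (by omega)).sub (mzv2 (2 * t + 3) 1 (by omega))).add
    ((mzv1 (2 * t + 4) (by omega)).mul_left (1 / 2))) (fun n => ?_) rfl
  rw [← mul_add, finite_identity]
  simp only [H, H2, pow_one]
  rw [pow_succ _ (2 * t + 2), show 2 * t + 4 = (2 * t + 2) + 2 by ring, pow_add _ (2 * t + 2) 2]
  simp only [← one_div_mul_one_div]
  ring

end A1C

theorem weighted_sum_a1c (w : ℕ) (hw : 4 ≤ w) (hew : Even w) :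
    (∑ a ∈ Finset.Icc 2 (w - 2), (-1 : ℝ) ^ a * mzv ![a, 1, w - 1 - a])
    = mzv ![w - 2, 2] - mzv ![w - 1, 1] + (1 / 2) * mzv ![w] := by
  obtain ⟨t, rfl⟩ : ∃ t, w = 2 * t + 4 := by
    obtain ⟨r, rfl⟩ := hew
    exact ⟨r - 2, by omega⟩
  exact A1C.main t
end

section
/- Let w ≥ 4 be an even integer. Then Σ_{a+c=w−1, a≥2, c≥1, a even (hence c odd)} ζ(a,1,c) = (1/2)·ζ(2)·ζ(w−2) − (1/4)·ζ(w). -/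
open Filter Topology

noncomputable def hh (n : ℕ) : ℝ := ∑ i ∈ Finset.range n, 1 / ((i : ℝ) + 1)

lemma hh_zero : hh 0 = 0 := by simp [hh]
lemma hh_succ (n : ℕ) : hh (n + 1) = hh n + 1 / ((n : ℝ) + 1) := by
  simp [hh, Finset.sum_range_succ]
lemma hh_nonneg (n : ℕ) : 0 ≤ hh n := Finset.sum_nonneg fun i _ => by positivity
lemma hh_mono {m n : ℕ} (h : m ≤ n) : hh m ≤ hh n := by
  induction h with
  | refl => rfl
  | step h ih => rw [hh_succ]; exact ih.trans (le_add_of_nonneg_right (by positivity))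

lemma hs_of {f g : ℕ → ℝ} {a b : ℝ} (h : HasSum f a) (hf : ∀ i, g i = f i) (hb : b = a) :
    HasSum g b := by
  rw [hb, funext hf]; exact h

lemma tel_one (c : ℕ) : HasSum (fun i : ℕ => 1 / ((i : ℝ) + c + 1) - 1 / ((i : ℝ) + c + 2))
    (1 / ((c : ℝ) + 1)) := by
  rw [hasSum_iff_tendsto_nat_of_nonneg]
  · have : ∀ n : ℕ, ∑ i ∈ Finset.range n, (1 / ((i : ℝ) + c + 1) - 1 / ((i : ℝ) + c + 2))
        = 1 / ((c : ℝ) + 1) - 1 / (((n + c : ℕ) : ℝ) + 1) := by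
      intro n
      induction n with
      | zero => simp
      | succ n ih => rw [Finset.sum_range_succ, ih]; push_cast; ring
    simp_rw [this]
    have h := (tendsto_one_div_add_atTop_nhds_zero_nat (𝕜 := ℝ)).comp (tendsto_add_atTop_nat c)
    simpa using (tendsto_const_nhds (x := 1 / ((c : ℝ) + 1))).sub h
  · intro i
    rw [sub_nonneg]
    apply one_div_le_one_div_of_le <;> first | positivity | linarith

lemma tel (c r : ℕ) : HasSum (fun i : ℕ => 1 / ((i : ℝ) + c + 1) - 1 / ((i : ℝ) + c + r + 1))
    (hh (c + r) - hh c) := by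
  induction r with
  | zero => simp
  | succ r ih =>
    refine hs_of (ih.add (tel_one (c + r))) ?_ ?_
    · intro i; push_cast; ring
    · rw [← add_assoc, hh_succ]; ring

lemma tel_prod (r : ℕ) : HasSum (fun i : ℕ => 1 / (((i : ℝ) + 1) * ((i : ℝ) + 1 + (r + 1))))
    (hh (r + 1) / (r + 1)) := by
  refine hs_of ((tel 0 (r + 1)).div_const ((r : ℝ) + 1)) ?_ ?_
  · intro i
    have : (i : ℝ) + 1 ≠ 0 := by positivity
    have : (r : ℝ) + 1 ≠ 0 := by positivity
    have : (i : ℝ) + 1 + (r + 1) ≠ 0 := by positivity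
    have : (i : ℝ) + (r + 1) + 1 ≠ 0 := by positivity
    push_cast
    rw [add_zero]
    field_simp
    ring
  · simp [hh_zero]

/-- summand at `m = i+1`. -/
noncomputable def tt (j i : ℕ) : ℝ := 1 / ((i : ℝ) + 1) * (hh (i + 1 + j) - hh ((i + 1 - j) + (j - (i + 1))))

noncomputable def cc (J : ℕ) : ℝ := ∑ i ∈ Finset.range J, hh (J - i) / ((i : ℝ) + 1)

lemma sum_pf (J : ℕ) : ∑ i ∈ Finset.range (J + 1), 1 / (((i : ℝ) + 1) * ((J - i : ℕ) + 1))
    = 2 * hh (J + 1) / (J + 2) := by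
  have h1 : ∑ i ∈ Finset.range (J + 1), 1 / (((J - i : ℕ) : ℝ) + 1) = hh (J + 1) := by
    have := Finset.sum_range_reflect (fun i : ℕ => 1 / ((i : ℝ) + 1)) (J + 1)
    rw [hh, ← this]
    refine Finset.sum_congr rfl fun i hi => ?_
    congr 3
  have h2 : 2 * hh (J + 1) / ((J : ℝ) + 2) = (hh (J + 1) + ∑ i ∈ Finset.range (J + 1), 1 / (((J - i : ℕ) : ℝ) + 1)) / (J + 2) := by
    rw [h1]; ring
  rw [h2, hh, ← Finset.sum_add_distrib, Finset.sum_div]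
  refine Finset.sum_congr rfl fun i hi => ?_
  have hi' : i ≤ J := by simp at hi; omega
  have e : ((J - i : ℕ) : ℝ) = J - i := by push_cast [hi']; rfl
  have p : (0 : ℝ) < ((J - i : ℕ) : ℝ) + 1 := by positivity
  have p1 : ((J - i : ℕ) : ℝ) + 1 ≠ 0 := p.ne'
  rw [e] at p1 ⊢
  have : (i : ℝ) + 1 ≠ 0 := by positivity
  have : (J : ℝ) + 2 ≠ 0 := by positivity
  field_simp
  ring

lemma cc_succ (J : ℕ) : cc (J + 1) = cc J + 2 * hh (J + 1) / (J + 2) := by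
  rw [← sum_pf, cc]
  have : cc J = ∑ i ∈ Finset.range (J + 1), hh (J - i) / ((i : ℝ) + 1) := by
    rw [Finset.sum_range_succ, cc]; simp [hh_zero]
  rw [this, ← Finset.sum_add_distrib]
  refine Finset.sum_congr rfl fun i hi => ?_
  have hi' : i ≤ J := by simp at hi; omega
  rw [show J + 1 - i = (J - i) + 1 by omega, hh_succ]
  have : (i : ℝ) + 1 ≠ 0 := by positivity
  have : ((J - i : ℕ) : ℝ) + 1 ≠ 0 := by positivity
  field_simp

set_option maxHeartbeats 400000 in
lemma hasSum_tt {z : ℝ} (hz : HasSum (fun i : ℕ => 1 / ((i : ℝ) + 1) ^ 2) z) (J : ℕ) :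
    HasSum (tt (J + 1)) (z + hh (J + 1) / (J + 1) + 2 * hh (J + 1) * hh J - 2 * cc J) := by
  induction J with
  | zero =>
    refine hs_of (hz.add (tel_prod 0)) ?_ ?_
    · intro i
      simp only [tt]
      rw [show i + 1 - (0 + 1) + (0 + 1 - (i + 1)) = i by omega, show i + 1 + (0 + 1) = i + 1 + 1 by omega, hh_succ, hh_succ]
      have : (i : ℝ) + 1 ≠ 0 := by positivity
      have : (i : ℝ) + 1 + 1 ≠ 0 := by positivity
      push_cast
      field_simp
      ring_nf
    · simp [hh_zero, cc]
  | succ J ih =>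
    obtain ⟨f, hf⟩ : ∃ f : ℕ → ℝ, ∀ i, f i = tt (J + 1 + 1) i - tt (J + 1) i - 1 / (((i : ℝ) + 1) * ((i : ℝ) + 1 + ((J + 1 : ℕ) + 1))) := ⟨_, fun _ => rfl⟩
    have hd : HasSum f
        (hh (J + 1) / (J + 1) - 2 * hh (J + 1) / (J + 2)) := by
      rw [← sum_pf, sub_eq_add_neg, ← Finset.sum_neg_distrib]
      have key : HasSum (fun i => f (i + (J + 1))) (hh (J + 1) / (J + 1)) := by
        refine hs_of (tel_prod J) (fun i => ?_) rfl
        simp only [hf, tt]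
        rw [show i + (J + 1) + 1 - (J + 1 + 1) + (J + 1 + 1 - (i + (J + 1) + 1)) = i by omega,
          show i + (J + 1) + 1 - (J + 1) + (J + 1 - (i + (J + 1) + 1)) = i + 1 by omega,
          show i + (J + 1) + 1 + (J + 1 + 1) = (i + (J + 1) + 1 + (J + 1)) + 1 by omega, hh_succ i, hh_succ (i + (J + 1) + 1 + (J + 1))]
        push_cast
        have : (i : ℝ) + 1 ≠ 0 := by positivity
        have : (i : ℝ) + (J + 1) + 1 ≠ 0 := by positivity
        have : (i : ℝ) + 1 + (J + 1) ≠ 0 := by positivity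
        have : (i : ℝ) + (J + 1) + 1 + (J + 1) + 1 ≠ 0 := by positivity
        have : (i : ℝ) + (J + 1) + 1 + (J + 1 + 1) ≠ 0 := by positivity
        field_simp
        ring
      have := (hasSum_nat_add_iff (J + 1)).1 key
      refine hs_of this (fun _ => rfl) ?_
      congr 1
      refine Finset.sum_congr rfl fun i hi => ?_
      have hi' : i ≤ J := by simp at hi; omega
      simp only [hf, tt]
      rw [show i + 1 - (J + 1 + 1) + (J + 1 + 1 - (i + 1)) = (J - i) + 1 by omega,
          show i + 1 - (J + 1) + (J + 1 - (i + 1)) = J - i by omega,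
          show i + 1 + (J + 1 + 1) = (i + 1 + (J + 1)) + 1 by omega, hh_succ (J - i), hh_succ (i + 1 + (J + 1))]
      have p1 : ((J - i : ℕ) : ℝ) + 1 ≠ 0 := by positivity
      generalize ((J - i : ℕ) : ℝ) = x at *
      push_cast
      have : (i : ℝ) + 1 ≠ 0 := by positivity
      have : (i : ℝ) + 1 + (J + 1) + 1 ≠ 0 := by positivity
      have : (i : ℝ) + 1 + (J + 1 + 1) ≠ 0 := by positivity
      field_simp
      ring
    refine hs_of ((ih.add (tel_prod (J + 1))).add hd) ?_ ?_
    · intro i; rw [hf]; ring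
    · rw [cc_succ, hh_succ (J + 1), hh_succ J]
      push_cast
      have : (J : ℝ) + 1 ≠ 0 := by positivity
      have : (J : ℝ) + 2 ≠ 0 := by positivity
      have : (J : ℝ) + 1 + 1 ≠ 0 := by positivity
      field_simp
      ring

noncomputable def bb (k : ℕ) : ℝ := (1 / 2) * ∑ m ∈ Finset.range k,
    (1 / (m : ℝ)) * (hh (k - 1) + hh k - hh (k - m) - hh (k + m - 1))

noncomputable def xx (z : ℝ) (J : ℕ) : ℝ := (1 / 2) * (z + hh (J + 1) / (J + 1) + 2 * hh (J + 1) * hh J - 2 * cc J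
  - ∑ i ∈ Finset.range (J + 1), tt (J + 1) i)

lemma sum_shift (a J : ℕ) : ∑ i ∈ Finset.range J, 1 / ((i : ℝ) + a + 1) = hh (a + J) - hh a := by
  induction J with
  | zero => simp
  | succ J ih => rw [Finset.sum_range_succ, ih, ← add_assoc, hh_succ]; push_cast; ring

lemma xx_sub_bb (z : ℝ) (J : ℕ) : xx z J = bb (J + 1) + (z / 2 - 1 / (4 * ((J : ℝ) + 1) ^ 2)) := by
  have e : ∑ i ∈ Finset.range (J + 1), tt (J + 1) i + 2 * bb (J + 1)
      = 1 / ((J : ℝ) + 1) * (hh J - (hh (J + 1 + J) - hh (J + 1))) + 2 * hh J ^ 2 + hh J / (J + 1) - 2 * cc J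
        + hh (J + 1 + J + 1) / (J + 1) := by
    rw [bb, Finset.sum_range_succ, Finset.sum_range_succ']
    simp only [Nat.cast_zero, div_zero, zero_mul, add_zero]
    have : 2 * hh J ^ 2 = ∑ i ∈ Finset.range J, 2 * hh J * (1 / ((i : ℝ) + 1)) := by
      rw [← Finset.mul_sum]; change _ = _ * hh J; ring
    rw [this, ← sum_shift]
    have : hh J / ((J : ℝ) + 1) = ∑ i ∈ Finset.range J, (1 / ((i : ℝ) + 1)) / (J + 1) := by
      rw [← Finset.sum_div]; rfl
    rw [this, cc]
    have : tt (J + 1) J = hh (J + 1 + J + 1) / (J + 1) := by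
      simp [tt, hh_zero]; rw [show J + 1 + (J + 1) = J + 1 + J + 1 by omega]; ring
    rw [this]
    have e1 : hh J - ∑ i ∈ Finset.range J, 1 / ((i : ℝ) + (J + 1 : ℕ) + 1)
        = ∑ i ∈ Finset.range J, (1 / ((i : ℝ) + 1) - 1 / ((i : ℝ) + (J + 1 : ℕ) + 1)) := by
      rw [Finset.sum_sub_distrib]; rfl
    rw [e1, Finset.mul_sum _ _ (1 / ((J : ℝ) + 1)), Finset.mul_sum _ _ (2 : ℝ), ← Finset.sum_add_distrib, ← Finset.sum_add_distrib, ← Finset.sum_sub_distrib,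
      ← mul_assoc, add_right_comm, Finset.mul_sum, ← Finset.sum_add_distrib]
    congr 1
    refine Finset.sum_congr rfl fun i hi => ?_
    have hi' : i < J := by simpa using hi
    simp only [tt]
    rw [show i + 1 + (J + 1) = (J + 1 + i) + 1 by omega, show i + 1 - (J + 1) + (J + 1 - (i + 1)) = J - i by omega,
      show J + 1 - 1 = J by omega, show J + 1 - (i + 1) = J - i by omega, show J + 1 + (i + 1) - 1 = J + 1 + i by omega,
      hh_succ (J + 1 + i), hh_succ J]
    push_cast
    have : (i : ℝ) + 1 ≠ 0 := by positivity
    have : (J : ℝ) + 1 ≠ 0 := by positivity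
    have : (J : ℝ) + 1 + i + 1 ≠ 0 := by positivity
    have : (i : ℝ) + (J + 1) + 1 ≠ 0 := by positivity
    field_simp
    ring
  have : xx z J = (1 / 2) * (z + hh (J + 1) / (J + 1) + 2 * hh (J + 1) * hh J - 2 * cc J) 
     - (1 / 2) * (∑ i ∈ Finset.range (J + 1), tt (J + 1) i + 2 * bb (J + 1)) + bb (J + 1) := by
    rw [xx]; ring
  rw [this, e, hh_succ (J + 1 + J), hh_succ J]
  push_cast
  have : (J : ℝ) + 1 ≠ 0 := by positivity
  have : (J : ℝ) + 1 + J + 1 ≠ 0 := by positivity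
  field_simp
  ring

lemma hasSum_xx {z : ℝ} (hz : HasSum (fun i : ℕ => 1 / ((i : ℝ) + 1) ^ 2) z) (J : ℕ) :
    HasSum (fun i => (1 / 2) * tt (J + 1) (i + (J + 1))) (xx z J) :=
  ((hasSum_nat_add_iff' (J + 1)).2 (hasSum_tt hz J)).mul_left _

lemma hasSum_k (J i : ℕ) : HasSum (fun q : ℕ => ((J : ℝ) + 1) / (((i + J + 2 : ℕ) : ℝ) * (((i + J + 3 + q : ℕ) : ℝ) ^ 2 - ((J : ℝ) + 1) ^ 2)))
    ((1 / 2) * tt (J + 1) (i + (J + 1))) := by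
  have h := (tel (i + 1) (2 * (J + 1))).mul_left (1 / 2 * (1 / (((i + (J + 1) : ℕ) : ℝ) + 1)))
  refine hs_of h ?_ ?_
  · intro q
    have : (i : ℝ) + (J + 1) + 1 ≠ 0 := by positivity
    have : (i : ℝ) + J + 2 ≠ 0 := by positivity
    have : (q : ℝ) + (i + 1) + 1 ≠ 0 := by positivity
    have : (q : ℝ) + (i + 1) + 2 * (J + 1) + 1 ≠ 0 := by positivity
    have e : ((i : ℝ) + J + 3 + q) ^ 2 - ((J : ℝ) + 1) ^ 2 = ((q : ℝ) + (i + 1) + 1) * ((q : ℝ) + (i + 1) + 2 * (J + 1) + 1) := by ring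
    push_cast
    rw [e]
    field_simp
    ring
  · simp only [tt]
    rw [show i + (J + 1) + 1 + (J + 1) = i + 1 + 2 * (J + 1) by omega, show i + (J + 1) + 1 - (J + 1) + (J + 1 - (i + (J + 1) + 1)) = i + 1 by omega]
    ring

lemma sum_j (k m : ℕ) (hm : m + 1 ≤ k) : ∑ j ∈ Finset.range (m + 1), 2 * (j : ℝ) / ((k : ℝ) ^ 2 - (j : ℝ) ^ 2)
    = hh (k - 1) + hh k - hh (k - (m + 1)) - hh (k + (m + 1) - 1) := by
  induction m with
  | zero => simp
  | succ m ih =>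
    rw [Finset.sum_range_succ, ih (by omega)]
    obtain ⟨d, rfl⟩ := Nat.exists_eq_add_of_le hm
    rw [show m + 1 + 1 + d - (m + 1) = d + 1 by omega, show m + 1 + 1 + d - (m + 1 + 1) = d by omega,
      show m + 1 + 1 + d + (m + 1 + 1) - 1 = (m + 1 + 1 + d + (m + 1) - 1) + 1 by omega, hh_succ d,
      hh_succ (m + 1 + 1 + d + (m + 1) - 1), show m + 1 + 1 + d + (m + 1) - 1 = m + 1 + 1 + d + m by omega]
    push_cast
    have e : ((m : ℝ) + 1 + 1 + d) ^ 2 - (m + 1) ^ 2 = (d + 1) * (m + 1 + 1 + d + m + 1) := by ring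
    rw [e]
    have : (d : ℝ) + 1 ≠ 0 := by positivity
    have : (m : ℝ) + 1 + 1 + d + m + 1 ≠ 0 := by positivity
    field_simp
    ring

lemma bb_eq (k : ℕ) : bb k = ∑ m ∈ Finset.range k, ∑ j ∈ Finset.range m, (j : ℝ) / (m * ((k : ℝ) ^ 2 - (j : ℝ) ^ 2)) := by
  rw [bb, Finset.mul_sum]
  refine Finset.sum_congr rfl fun m hm => ?_
  rcases m with _ | m
  · simp
  · rw [← sum_j k m (by simp at hm; omega), Finset.mul_sum, Finset.mul_sum]
    refine Finset.sum_congr rfl fun j hj => ?_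
    rw [div_mul_eq_div_div_swap]
    ring

lemma bb_nonneg (k : ℕ) : 0 ≤ bb k := by
  rw [bb_eq]
  refine Finset.sum_nonneg fun m hm => Finset.sum_nonneg fun j hj => ?_
  have : (j : ℝ) ≤ k := by simp at hm hj; exact_mod_cast (hj.trans hm).le
  have : 0 ≤ (k : ℝ) ^ 2 - (j : ℝ) ^ 2 := by
    rw [sub_nonneg]; gcongr
  positivity

lemma bb_le (k : ℕ) : bb (k + 1) ≤ hh (k + 1) ^ 2 := by
  rw [bb, Finset.sum_range_succ']
  simp only [Nat.cast_zero, div_zero, zero_mul, add_zero]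
  have : ∑ i ∈ Finset.range k, 1 / ((i + 1 : ℕ) : ℝ) * (hh (k + 1 - 1) + hh (k + 1) - hh (k + 1 - (i + 1)) - hh (k + 1 + (i + 1) - 1))
      ≤ ∑ i ∈ Finset.range k, 1 / ((i : ℝ) + 1) * (2 * hh (k + 1)) := by
    refine Finset.sum_le_sum fun i hi => ?_
    rw [Nat.cast_add, Nat.cast_one]
    refine mul_le_mul_of_nonneg_left ?_ (by positivity)
    have := hh_nonneg (k + 1 - (i + 1))
    have := hh_nonneg (k + 1 + (i + 1) - 1)
    have := hh_mono (show k + 1 - 1 ≤ k + 1 by omega)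
    linarith
  rw [← Finset.sum_mul] at this
  change _ ≤ hh k * _ at this
  nlinarith [hh_mono (show k ≤ k + 1 by omega), hh_nonneg k, hh_nonneg (k + 1)]

lemma hh_le (k : ℕ) : hh (k + 1) ≤ 5 * ((k : ℝ) + 1) ^ (1 / 4 : ℝ) := by
  have h := harmonic_le_one_add_log (k + 1)
  have e : ((harmonic (k + 1) : ℚ) : ℝ) = hh (k + 1) := by
    simp [harmonic, hh]
  rw [e] at h
  have h2 := Real.log_le_rpow_div (x := ((k + 1 : ℕ) : ℝ)) (by positivity) (ε := 1 / 4) (by norm_num)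
  have h3 : (1 : ℝ) ≤ ((k : ℝ) + 1) ^ (1 / 4 : ℝ) := Real.one_le_rpow (by linarith [(Nat.cast_nonneg k : (0 : ℝ) ≤ k)]) (by norm_num)
  push_cast at h h2
  linarith

lemma summable_bb (n : ℕ) (hn : 1 ≤ n) : Summable (fun k : ℕ => 1 / ((k : ℝ) + 1) ^ (2 * n) * bb (k + 1)) := by
  have s : Summable (fun k : ℕ => 25 * (1 / ((k + 1 : ℕ) : ℝ) ^ (3 / 2 : ℝ))) :=
    (((summable_nat_add_iff 1).2 (Real.summable_one_div_nat_rpow.2 (by norm_num : (1 : ℝ) < 3 / 2)))).mul_left _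
  refine Summable.of_nonneg_of_le (fun k => mul_nonneg (by positivity) (bb_nonneg _)) (fun k => ?_) s
  have p : (0 : ℝ) < (k : ℝ) + 1 := by positivity
  have h1 : bb (k + 1) ≤ 25 * ((k : ℝ) + 1) ^ (1 / 2 : ℝ) := by
    refine (bb_le k).trans ?_
    have := pow_le_pow_left₀ (hh_nonneg _) (hh_le k) 2
    refine this.trans_eq ?_
    rw [mul_pow, ← Real.rpow_natCast, ← Real.rpow_natCast, ← Real.rpow_mul p.le]
    norm_num
  have h2 : 1 / ((k : ℝ) + 1) ^ (2 * n) ≤ 1 / ((k : ℝ) + 1) ^ 2 := by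
    apply one_div_le_one_div_of_le (by positivity)
    apply pow_le_pow_right₀ (by linarith [(Nat.cast_nonneg k : (0 : ℝ) ≤ k)]) (by omega)
  calc _ ≤ 1 / ((k : ℝ) + 1) ^ 2 * (25 * ((k : ℝ) + 1) ^ (1 / 2 : ℝ)) :=
        mul_le_mul h2 h1 (bb_nonneg _) (by positivity)
    _ = _ := by
      push_cast
      have : ((k : ℝ) + 1) ^ 2 = ((k : ℝ) + 1) ^ (3 / 2 : ℝ) * ((k : ℝ) + 1) ^ (1 / 2 : ℝ) := by
        rw [← Real.rpow_add p, ← Real.rpow_natCast]; norm_num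
      rw [this]
      field_simp

open scoped ENNReal

noncomputable def EE (u : ℕ → ℕ → ℕ → ℝ) : ℝ≥0∞ :=
  ∑' j : ℕ, ∑' m : ℕ, ∑' k : ℕ, if 0 < j ∧ j < m ∧ m < k then ENNReal.ofReal (u k m j) else 0

lemma EE_congr {u v : ℕ → ℕ → ℕ → ℝ} (h : ∀ k m j, 0 < j → j < m → m < k → u k m j = v k m j) :
    EE u = EE v := by
  unfold EE
  refine tsum_congr fun j => tsum_congr fun m => tsum_congr fun k => ?_
  split_ifs with c
  · rw [h k m j c.1 c.2.1 c.2.2]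
  · rfl

lemma EE_add {u v : ℕ → ℕ → ℕ → ℝ} (hu : ∀ k m j, 0 < j → j < m → m < k → 0 ≤ u k m j)
    (hv : ∀ k m j, 0 < j → j < m → m < k → 0 ≤ v k m j) :
    EE (fun k m j => u k m j + v k m j) = EE u + EE v := by
  unfold EE
  simp_rw [← ENNReal.tsum_add]
  refine tsum_congr fun j => tsum_congr fun m => tsum_congr fun k => ?_
  split_ifs with c
  · rw [ENNReal.ofReal_add (hu k m j c.1 c.2.1 c.2.2) (hv k m j c.1 c.2.1 c.2.2)]
  · simp

lemma EE_sum (s : Finset ℕ) (u : ℕ → ℕ → ℕ → ℕ → ℝ) (hu : ∀ a k m j, 0 ≤ u a k m j) :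
    EE (fun k m j => ∑ a ∈ s, u a k m j) = ∑ a ∈ s, EE (u a) := by
  induction s using Finset.induction_on with
  | empty => simp [EE]
  | insert a s ha ih =>
    simp_rw [Finset.sum_insert ha]
    rw [← ih, EE_add (fun k m j _ _ _ => hu a k m j) (fun k m j _ _ _ => Finset.sum_nonneg fun a _ => hu a k m j)]

def eqv3 : ℕ × ℕ × ℕ ≃ (Fin 3 → ℕ) where
  toFun p := ![p.2.2, p.2.1, p.1]
  invFun k := (k 2, k 1, k 0)
  left_inv p := by simp
  right_inv k := by ext i; fin_cases i <;> rfl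

lemma mzv3 (a b c : ℕ) : mzv ![a, b, c] =
    (EE fun k m j => 1 / (k : ℝ) ^ a * (1 / (m : ℝ) ^ b) * (1 / (j : ℝ) ^ c)).toReal := by
  have h1 : mzv ![a, b, c] = (∑' k : {k : Fin 3 → ℕ // StrictAnti k ∧ ∀ i, 0 < k i},
      ENNReal.ofReal (∏ i, (1 : ℝ) / (k.1 i : ℝ) ^ (![a, b, c] i))).toReal := by
    rw [ENNReal.tsum_toReal_eq (fun _ => ENNReal.ofReal_ne_top), mzv]
    refine tsum_congr fun k => ?_
    rw [ENNReal.toReal_ofReal (Finset.prod_nonneg fun i _ => by positivity)]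
  rw [h1]
  congr 1
  have h2 := tsum_subtype {k : Fin 3 → ℕ | StrictAnti k ∧ ∀ i, 0 < k i}
    (fun k => ENNReal.ofReal (∏ i, (1 : ℝ) / (k i : ℝ) ^ (![a, b, c] i)))
  refine h2.trans ?_
  rw [← eqv3.tsum_eq, ENNReal.tsum_prod', EE]
  refine tsum_congr fun j => ?_
  rw [ENNReal.tsum_prod']
  refine tsum_congr fun m => tsum_congr fun k => ?_
  have : (eqv3 (j, m, k) ∈ {k : Fin 3 → ℕ | StrictAnti k ∧ ∀ i, 0 < k i}) ↔ (0 < j ∧ j < m ∧ m < k) := by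
    simp only [eqv3, Equiv.coe_fn_mk, Set.mem_ofPred_eq, Fin.strictAnti_iff_succ_lt, Fin.forall_fin_succ]
    simp
    omega
  by_cases hc : 0 < j ∧ j < m ∧ m < k
  · rw [Set.indicator_of_mem (this.2 hc), if_pos hc, Fin.prod_univ_three]
    rfl
  · rw [Set.indicator_of_notMem (fun h => hc (this.1 h)), if_neg hc]

def eqv1 : ℕ ≃ {k : Fin 1 → ℕ // StrictAnti k ∧ ∀ i, 0 < k i} where
  toFun n := ⟨![n + 1], by constructor <;> simp [StrictAnti]⟩
  invFun k := k.1 0 - 1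
  left_inv n := by simp
  right_inv k := by
    ext i
    have := k.2.2 0
    fin_cases i
    simp
    omega

lemma mzv1 (s : ℕ) : mzv ![s] = ∑' k : ℕ, 1 / ((k : ℝ) + 1) ^ s := by
  rw [mzv, ← eqv1.tsum_eq]
  refine tsum_congr fun k => ?_
  simp [eqv1]

lemma shift (g : ℕ → ℝ≥0∞) (n : ℕ) (h : ∀ i < n, g i = 0) : ∑' i, g i = ∑' i, g (i + n) := by
  rw [← Summable.sum_add_tsum_nat_add' (f := g) (k := n) ENNReal.summable, Finset.sum_eq_zero, zero_add]
  intro i hi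
  exact h i (by simpa using hi)

lemma ofReal_hs {f : ℕ → ℝ} {a : ℝ} (h : HasSum f a) (hf : ∀ i, 0 ≤ f i) :
    ∑' i, ENNReal.ofReal (f i) = ENNReal.ofReal a := by
  rw [← h.tsum_eq, ENNReal.ofReal_tsum_of_nonneg hf h.summable]

lemma EE_h {z : ℝ} (hz : HasSum (fun i : ℕ => 1 / ((i : ℝ) + 1) ^ 2) z) (n : ℕ) :
    EE (fun k m j => 1 / (j : ℝ) ^ (2 * n) * ((j : ℝ) / (m * ((k : ℝ) ^ 2 - (j : ℝ) ^ 2))))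
    = ∑' J : ℕ, ENNReal.ofReal (1 / ((J : ℝ) + 1) ^ (2 * n) * xx z J) := by
  rw [EE, shift _ 1 (by intro i hi; simp [show i = 0 by omega])]
  refine tsum_congr fun J => ?_
  have nn : ∀ i q : ℕ, 0 ≤ ((J : ℝ) + 1) / (((i + J + 2 : ℕ) : ℝ) * (((i + J + 3 + q : ℕ) : ℝ) ^ 2 - ((J : ℝ) + 1) ^ 2)) := by
    intro i q
    have : 0 ≤ ((i + J + 3 + q : ℕ) : ℝ) ^ 2 - ((J : ℝ) + 1) ^ 2 := by
      rw [sub_nonneg]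
      have : (J : ℝ) + 1 ≤ ((i + J + 3 + q : ℕ) : ℝ) := by exact_mod_cast (by omega)
      gcongr
    positivity
  have tn : ∀ i, 0 ≤ (1 / 2) * tt (J + 1) (i + (J + 1)) := fun i => (hasSum_k J i).nonneg (nn i)
  rw [shift _ (J + 2)]
  · rw [← ofReal_hs ((hasSum_xx hz J).mul_left _) (fun i => mul_nonneg (by positivity) (tn i))]
    refine tsum_congr fun i => ?_
    rw [← ofReal_hs ((hasSum_k J i).mul_left _) (fun q => mul_nonneg (by positivity) (nn i q)), shift _ (i + J + 3)]
    · refine tsum_congr fun q => ?_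
      rw [if_pos (by omega)]
      congr 1
      push_cast
      ring_nf
    · intro k hk
      rw [if_neg (by omega)]
  · intro m hm
    rw [ENNReal.tsum_eq_zero]
    intro k
    rw [if_neg (by omega)]

lemma EE_g (n : ℕ) :
    EE (fun k m j => 1 / (k : ℝ) ^ (2 * n) * ((j : ℝ) / (m * ((k : ℝ) ^ 2 - (j : ℝ) ^ 2))))
    = ∑' K : ℕ, ENNReal.ofReal (1 / ((K : ℝ) + 1) ^ (2 * n) * bb (K + 1)) := by
  have : EE (fun k m j => 1 / (k : ℝ) ^ (2 * n) * ((j : ℝ) / (m * ((k : ℝ) ^ 2 - (j : ℝ) ^ 2))))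
      = ∑' k : ℕ, ∑' m : ℕ, ∑' j : ℕ, if 0 < j ∧ j < m ∧ m < k then
        ENNReal.ofReal (1 / (k : ℝ) ^ (2 * n) * ((j : ℝ) / (m * ((k : ℝ) ^ 2 - (j : ℝ) ^ 2)))) else 0 := by
    rw [EE, ENNReal.tsum_comm]
    have : ∀ f : ℕ → ℕ → ℕ → ℝ≥0∞, ∑' (m : ℕ) (j : ℕ) (k : ℕ), f m j k = ∑' (k : ℕ) (m : ℕ) (j : ℕ), f m j k := by
      intro f
      rw [ENNReal.tsum_comm (f := fun k m => ∑' j, f m j k)]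
      exact tsum_congr fun m => ENNReal.tsum_comm
    rw [this]
  rw [this, shift _ 1 (by intro i hi; simp [show i = 0 by omega])]
  refine tsum_congr fun K => ?_
  have nn : ∀ m j : ℕ, j < m → m < K + 1 → 0 ≤ (1 / ((K + 1 : ℕ) : ℝ) ^ (2 * n) * ((j : ℝ) / (m * (((K + 1 : ℕ) : ℝ) ^ 2 - (j : ℝ) ^ 2)))) := by
    intro m j h1 h2
    have : 0 ≤ ((K + 1 : ℕ) : ℝ) ^ 2 - (j : ℝ) ^ 2 := by
      rw [sub_nonneg]
      have : (j : ℝ) ≤ ((K + 1 : ℕ) : ℝ) := by exact_mod_cast (by omega)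
      gcongr
    positivity
  rw [bb_eq, Finset.mul_sum, ENNReal.ofReal_sum_of_nonneg, tsum_eq_sum (s := Finset.range (K + 1))]
  · refine Finset.sum_congr rfl fun m hm => ?_
    rw [Finset.mem_range] at hm
    rw [Finset.mul_sum, ENNReal.ofReal_sum_of_nonneg, tsum_eq_sum (s := Finset.range m)]
    · refine Finset.sum_congr rfl fun j hj => ?_
      rw [Finset.mem_range] at hj
      rcases Nat.eq_zero_or_pos j with rfl | h0
      · simp
      · rw [if_pos ⟨h0, hj, hm⟩]; push_cast; rfl
    · intro j hj
      rw [Finset.mem_range] at hj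
      rw [if_neg (by omega)]
    · intro j hj
      rw [Finset.mem_range] at hj
      exact_mod_cast nn m j hj hm
  · intro m hm
    rw [Finset.mem_range] at hm
    rw [ENNReal.tsum_eq_zero]
    intro j
    rw [if_neg (by omega)]
  · intro m hm
    rw [Finset.mem_range] at hm
    rw [Finset.mul_sum]
    refine Finset.sum_nonneg fun j hj => ?_
    rw [Finset.mem_range] at hj
    exact_mod_cast nn m j hj hm

lemma geom (n : ℕ) (k j : ℝ) (hj : 0 < j) (hk : j < k) :
    ∑ α ∈ Finset.range n, 1 / k ^ (2 * α + 2) * (1 / j ^ (2 * (n - 1 - α) + 1))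
    = j / (k ^ 2 - j ^ 2) * (1 / j ^ (2 * n) - 1 / k ^ (2 * n)) := by
  have hk0 : k ≠ 0 := by linarith
  have hj0 : j ≠ 0 := hj.ne'
  have hd : k ^ 2 - j ^ 2 ≠ 0 := by nlinarith
  induction n with
  | zero => simp
  | succ n ih =>
    rw [Finset.sum_range_succ]
    have : ∑ α ∈ Finset.range n, 1 / k ^ (2 * α + 2) * (1 / j ^ (2 * (n + 1 - 1 - α) + 1))
      = (∑ α ∈ Finset.range n, 1 / k ^ (2 * α + 2) * (1 / j ^ (2 * (n - 1 - α) + 1))) * (1 / j ^ 2) := by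
      rw [Finset.sum_mul]
      refine Finset.sum_congr rfl fun α hα => ?_
      rw [Finset.mem_range] at hα
      rw [show 2 * (n + 1 - 1 - α) + 1 = 2 * (n - 1 - α) + 1 + 2 by omega, pow_add j _ 2]
      field_simp
    rw [this, ih, show n + 1 - 1 - n = 0 by omega]
    field_simp
    ring

lemma reindex (n : ℕ) (f : ℕ → ℝ) : ∑ a ∈ (Finset.Icc 2 (2 * n)).filter (fun a => Even a), f a
    = ∑ α ∈ Finset.range n, f (2 * α + 2) := by
  symm
  refine Finset.sum_bij (fun α _ => 2 * α + 2) ?_ ?_ ?_ ?_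
  · intro α h
    simp at h
    simp only [Finset.mem_filter, Finset.mem_Icc]
    exact ⟨by omega, ⟨α + 1, by omega⟩⟩
  · intro a _ b _ h; omega
  · intro a h
    simp only [Finset.mem_filter, Finset.mem_Icc] at h
    obtain ⟨h1, b, hb⟩ := h
    exact ⟨b - 1, by simp; omega, by omega⟩
  · intros; rfl

theorem sum_a1c_a_even (w : ℕ) (hw : 4 ≤ w) (hew : Even w) :
    (∑ a ∈ (Finset.Icc 2 (w - 2)).filter (fun a => Even a), mzv ![a, 1, w - 1 - a])
    = (1 / 2) * mzv ![2] * mzv ![w - 2] - (1 / 4) * mzv ![w] := by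
  obtain ⟨n, hn, rfl⟩ : ∃ n, 1 ≤ n ∧ w = 2 * n + 2 := by
    obtain ⟨b, rfl⟩ := hew
    exact ⟨b - 1, by omega, by omega⟩
  rw [show 2 * n + 2 - 2 = 2 * n by omega, show 2 * n + 2 - 1 = 2 * n + 1 by omega]
  have sm : ∀ s : ℕ, 2 ≤ s → HasSum (fun i : ℕ => 1 / ((i : ℝ) + 1) ^ s) (mzv ![s]) := by
    intro s hs
    rw [mzv1]
    apply Summable.hasSum
    have := (summable_nat_add_iff 1).2 (Real.summable_one_div_nat_pow.2 (show 1 < s by omega))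
    simpa using this
  have hz := sm 2 le_rfl
  have h2n := sm (2 * n) (by omega)
  have hw := sm (2 * n + 2) (by omega)
  set z := mzv ![2]
  have hB := summable_bb n hn
  have hc : HasSum (fun J : ℕ => 1 / ((J : ℝ) + 1) ^ (2 * n) * (z / 2 - 1 / (4 * ((J : ℝ) + 1) ^ 2)))
      ((1 / 2) * z * mzv ![2 * n] - (1 / 4) * mzv ![2 * n + 2]) := by
    refine hs_of ((h2n.mul_left ((1 / 2) * z)).sub (hw.mul_left (1 / 4))) (fun i => ?_) rfl
    have : (i : ℝ) + 1 ≠ 0 := by positivity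
    field_simp
    ring
  have hX : HasSum (fun J : ℕ => 1 / ((J : ℝ) + 1) ^ (2 * n) * xx z J)
      (∑' k : ℕ, 1 / ((k : ℝ) + 1) ^ (2 * n) * bb (k + 1) + ((1 / 2) * z * mzv ![2 * n] - (1 / 4) * mzv ![2 * n + 2])) := by
    refine hs_of (hB.hasSum.add hc) (fun i => ?_) rfl
    rw [xx_sub_bb]; ring
  have hz1 : 1 ≤ z := by
    have := le_hasSum hz 0 (fun i _ => by positivity)
    simpa using this
  have cn : ∀ J : ℕ, 0 ≤ z / 2 - 1 / (4 * ((J : ℝ) + 1) ^ 2) := by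
    intro J
    have : 1 / (4 * ((J : ℝ) + 1) ^ 2) ≤ 1 / 2 := by
      apply one_div_le_one_div_of_le (by norm_num)
      nlinarith [(Nat.cast_nonneg J : (0 : ℝ) ≤ J)]
    linarith
  have xn : ∀ J : ℕ, 0 ≤ 1 / ((J : ℝ) + 1) ^ (2 * n) * xx z J := by
    intro J
    rw [xx_sub_bb]
    exact mul_nonneg (by positivity) (add_nonneg (bb_nonneg _) (cn J))
  have hR : 0 ≤ (1 / 2) * z * mzv ![2 * n] - (1 / 4) * mzv ![2 * n + 2] :=
    hc.nonneg fun J => mul_nonneg (by positivity) (cn J)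
  have bn : ∀ k : ℕ, 0 ≤ 1 / ((k : ℝ) + 1) ^ (2 * n) * bb (k + 1) := fun k => mul_nonneg (by positivity) (bb_nonneg _)
  have eh := EE_h hz n
  have eg := EE_g n
  rw [ofReal_hs hX xn, ENNReal.ofReal_add (tsum_nonneg bn) hR] at eh
  rw [ofReal_hs hB.hasSum bn] at eg
  set u : ℕ → ℕ → ℕ → ℕ → ℝ := fun a k m j => 1 / (k : ℝ) ^ a * (1 / (m : ℝ) ^ 1) * (1 / (j : ℝ) ^ (2 * n + 1 - a)) with hu
  have un : ∀ a k m j, 0 ≤ u a k m j := by intro a k m j; simp only [hu]; positivity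
  have efg : EE (fun k m j => (∑ a ∈ (Finset.Icc 2 (2 * n)).filter (fun a => Even a), u a k m j)
      + 1 / (k : ℝ) ^ (2 * n) * ((j : ℝ) / (m * ((k : ℝ) ^ 2 - (j : ℝ) ^ 2))))
      = EE (fun k m j => 1 / (j : ℝ) ^ (2 * n) * ((j : ℝ) / (m * ((k : ℝ) ^ 2 - (j : ℝ) ^ 2)))) := by
    refine EE_congr fun k m j h0 h1 h2 => ?_
    have g := geom n k j (by exact_mod_cast h0) (by exact_mod_cast h1.trans h2)
    have : ∑ a ∈ (Finset.Icc 2 (2 * n)).filter (fun a => Even a), u a k m j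
        = (1 / (m : ℝ)) * ∑ α ∈ Finset.range n, 1 / (k : ℝ) ^ (2 * α + 2) * (1 / (j : ℝ) ^ (2 * (n - 1 - α) + 1)) := by
      rw [reindex n (fun a => u a k m j), Finset.mul_sum]
      refine Finset.sum_congr rfl fun α hα => ?_
      rw [Finset.mem_range] at hα
      simp only [hu]
      rw [show 2 * n + 1 - (2 * α + 2) = 2 * (n - 1 - α) + 1 by omega]
      ring
    rw [this, g, div_mul_eq_div_div_swap]
    ring
  rw [EE_add, EE_sum _ _ un, eg, eh, add_comm (ENNReal.ofReal _)] at efg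
  · have fin := (ENNReal.add_left_inj ENNReal.ofReal_ne_top).1 efg
    have : ∀ a ∈ (Finset.Icc 2 (2 * n)).filter (fun a => Even a), EE (u a) ≠ ⊤ := by
      rw [← ENNReal.sum_ne_top, fin]; exact ENNReal.ofReal_ne_top
    simp_rw [mzv3]
    rw [← ENNReal.toReal_sum this, fin, ENNReal.toReal_ofReal hR]
  · intro k m j _ _ _
    exact Finset.sum_nonneg fun a _ => un a k m j
  · intro k m j h0 h1 h2
    have : (j : ℝ) ≤ k := by exact_mod_cast (h1.trans h2).le
    have : 0 ≤ (k : ℝ) ^ 2 - (j : ℝ) ^ 2 := by rw [sub_nonneg]; gcongr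
    positivity
end
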